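/- Let $C_1,\ldots,C_\ell$ be mutually commuting positive semi-definite operators on $\mathcal{K}$ and $A_1,\ldots,A_\ell$ self-adjoint operators on $\mathcal{H}$. Then for every probability distribution $(p_i)_{i=1}^\ell$, $\sum_{i=1}^\ell p_i\, C_i\otimes A_i^{\downarrow} \;\succeq\; \sum_{i=1}^\ell p_i\, C_i\otimes A_i$ in the majorization order on eigenvalue vectors. -/

import Mathlib

open Matrix Kronecker
open scoped ComplexOrder

/-- `Maj x y` : the real vector `x` majorizes `y`. -/
def Maj {ι : Type*} [Fintype ι] (x y : ι → ℝ) : Prop :=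
  (∀ s : Finset ι, ∃ t : Finset ι, t.card = s.card ∧ ∑ i ∈ s, y i ≤ ∑ i ∈ t, x i) ∧
    ∑ i, x i = ∑ i, y i

lemma aux_top {ι : Type*} [Fintype ι] (x w : ι → ℝ) (m : ℕ)
    (h0 : ∀ i, 0 ≤ w i) (h1 : ∀ i, w i ≤ 1) (hs : ∑ i, w i = m) :
    ∃ t : Finset ι, t.card = m ∧ ∑ i, w i * x i ≤ ∑ i ∈ t, x i := by
  classical
  have hm : m ≤ Fintype.card ι := by
    have : ∑ i, w i ≤ ∑ _i : ι, (1:ℝ) := Finset.sum_le_sum fun i _ => h1 i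
    rw [hs] at this
    simp at this
    exact_mod_cast this
  have hne : (Finset.powersetCard m (Finset.univ : Finset ι)).Nonempty :=
    Finset.powersetCard_nonempty.2 (by simpa using hm)
  obtain ⟨t, ht, hmax⟩ := Finset.exists_max_image _ (fun t : Finset ι => ∑ i ∈ t, x i) hne
  have htc : t.card = m := (Finset.mem_powersetCard.1 ht).2
  refine ⟨t, htc, ?_⟩
  rcases t.eq_empty_or_nonempty with rfl | hte
  · simp at htc
    subst htc
    have : ∀ i, w i = 0 := by
      have := (Finset.sum_eq_zero_iff_of_nonneg (fun i _ => h0 i)).1 (by simpa using hs)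
      intro i; exact this i (Finset.mem_univ _)
    simp [this]
  obtain ⟨a, ha, hmin⟩ := Finset.exists_min_image t x hte
  have hout : ∀ i, i ∉ t → x i ≤ x a := by
    intro i hi
    have hmem : insert i (t.erase a) ∈ Finset.powersetCard m (Finset.univ : Finset ι) := by
      refine Finset.mem_powersetCard.2 ⟨Finset.subset_univ _, ?_⟩
      rw [Finset.card_insert_of_notMem (by simp [hi]), Finset.card_erase_of_mem ha, htc]
      have : 0 < t.card := hte.card_pos
      omega
    have := hmax _ hmem
    rw [Finset.sum_insert (by simp [hi])] at this
    have h2 := Finset.add_sum_erase t x ha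
    linarith
  have key : ∑ i, w i * (x i - x a) ≤ ∑ i, if i ∈ t then x i - x a else 0 := by
    refine Finset.sum_le_sum fun i _ => ?_
    split_ifs with h
    · have := hmin i h
      nlinarith [h1 i]
    · have := hout i h
      nlinarith [h0 i]
  rw [Finset.sum_ite_mem, Finset.univ_inter, Finset.sum_sub_distrib] at key
  simp only [mul_sub, Finset.sum_sub_distrib, ← Finset.sum_mul, hs] at key
  simp [htc] at key
  linarith

noncomputable def gw (q : ℝ) (j : ℕ) : ℝ := min q (j + 1) - min q j

lemma gw_nonneg (q : ℝ) (j : ℕ) : 0 ≤ gw q j := by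
  unfold gw
  have : min q (j:ℝ) ≤ min q (j+1) := min_le_min le_rfl (by linarith)
  linarith

lemma gw_le_one (q : ℝ) (j : ℕ) : gw q j ≤ 1 := by
  unfold gw
  rcases min_cases q (j:ℝ) with h | h <;> rcases min_cases q ((j:ℝ)+1) with h' | h' <;> linarith

lemma gw_sum {n : ℕ} (q : ℝ) (h0 : 0 ≤ q) (hq : q ≤ n) : ∑ j : Fin n, gw q j = q := by
  rw [Fin.sum_univ_eq_sum_range (fun j => gw q j) n]
  have := Finset.sum_range_sub (fun j : ℕ => min q (j:ℝ)) n
  simp only [Nat.cast_add, Nat.cast_one] at this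
  unfold gw
  rw [this]
  simp [hq, h0]

lemma aux_gw {n : ℕ} (μ : Fin n → ℝ) (hμ : Antitone μ) (a : Fin n → ℝ)
    (h0 : ∀ i, 0 ≤ a i) (h1 : ∀ i, a i ≤ 1) (q : ℝ) (hq : ∑ j, a j = q) :
    ∑ j, a j * μ j ≤ ∑ j : Fin n, gw q j * μ j := by
  have hq0 : 0 ≤ q := hq ▸ Finset.sum_nonneg fun i _ => h0 i
  have hqn : q ≤ n := by
    have : ∑ i, a i ≤ ∑ _i : Fin n, (1:ℝ) := Finset.sum_le_sum fun i _ => h1 i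
    rw [hq] at this
    simpa using this
  have hsum := gw_sum q hq0 hqn
  have key : ∃ θ : ℝ, ∀ j : Fin n, 0 ≤ (gw q j - a j) * (μ j - θ) := by
    by_cases hlt : ⌊q⌋₊ < n
    · refine ⟨μ ⟨_, hlt⟩, fun j => ?_⟩
      have hf1 := Nat.floor_le hq0
      have hf2 := Nat.lt_floor_add_one q
      rcases lt_trichotomy (j : ℕ) ⌊q⌋₊ with h | h | h
      · have hw : gw q j = 1 := by
          have : ((j:ℕ):ℝ) + 1 ≤ ⌊q⌋₊ := by exact_mod_cast h
          unfold gw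
          rw [min_eq_right (by linarith), min_eq_right (by linarith)]; ring
        have : μ ⟨_, hlt⟩ ≤ μ j := hμ (by simpa [Fin.le_def] using h.le)
        rw [hw]
        exact mul_nonneg (by linarith [h1 j]) (by linarith)
      · have : j = ⟨_, hlt⟩ := Fin.ext h
        rw [this]; simp
      · have hw : gw q j = 0 := by
          have : (⌊q⌋₊:ℝ) + 1 ≤ (j:ℕ) := by exact_mod_cast h
          unfold gw
          rw [min_eq_left (by linarith), min_eq_left (by linarith)]; ring
        have : μ j ≤ μ ⟨_, hlt⟩ := hμ (by simpa [Fin.le_def] using h.le)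
        rw [hw]
        exact mul_nonneg_of_nonpos_of_nonpos (by linarith [h0 j]) (by linarith)
    · have hn : (n:ℝ) ≤ q := by
        have := Nat.floor_le hq0
        have h2 : (n:ℝ) ≤ ⌊q⌋₊ := by exact_mod_cast not_lt.1 hlt
        linarith
      have hqe : q = n := le_antisymm hqn hn
      have ha : ∀ j, 1 - a j = 0 := by
        have hz : ∑ j, (1 - a j) = 0 := by
          rw [Finset.sum_sub_distrib, hq, hqe]; simp
        have := (Finset.sum_eq_zero_iff_of_nonneg (fun i _ => by linarith [h1 i])).1 hz
        intro j; exact this j (Finset.mem_univ _)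
      have hg : ∀ j : Fin n, 1 - gw q j = 0 := by
        have hz : ∑ j : Fin n, (1 - gw q j) = 0 := by
          rw [Finset.sum_sub_distrib, hsum, hqe]; simp
        have := (Finset.sum_eq_zero_iff_of_nonneg
          (fun i _ => by linarith [gw_le_one q i])).1 hz
        intro j; exact this j (Finset.mem_univ _)
      refine ⟨0, fun j => ?_⟩
      rw [show gw q j - a j = 0 by linarith [ha j, hg j]]; simp
  obtain ⟨θ, hθ⟩ := key
  have h3 : 0 ≤ ∑ j : Fin n, (gw q j - a j) * (μ j - θ) := Finset.sum_nonneg fun j _ => hθ j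
  simp only [sub_mul, mul_sub, Finset.sum_sub_distrib, ← Finset.sum_mul, hq, hsum] at h3
  linarith

lemma conj_diag_apply {m : Type*} [Fintype m] [DecidableEq m] (G : Matrix m m ℂ) (x : m → ℝ)
    (v : m) :
    (Gᴴ * diagonal (fun r => (x r : ℂ)) * G) v v
      = ((∑ r, x r * Complex.normSq (G r v) : ℝ) : ℂ) := by
  rw [Matrix.mul_apply]
  push_cast
  refine Finset.sum_congr rfl fun r _ => ?_
  rw [Matrix.mul_diagonal, Matrix.conjTranspose_apply, Complex.normSq_eq_conj_mul_self]
  simp only [Complex.star_def]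
  ring

lemma unitary_col {m : Type*} [Fintype m] [DecidableEq m] (G : Matrix m m ℂ)
    (hG : Gᴴ * G = 1) (v : m) : ∑ r, Complex.normSq (G r v) = 1 := by
  have h := conj_diag_apply G (fun _ => 1) v
  simp [hG] at h
  exact_mod_cast h.symm

lemma unitary_row {m : Type*} [Fintype m] [DecidableEq m] (G : Matrix m m ℂ)
    (hG : Gᴴ * G = 1) (r : m) : ∑ v, Complex.normSq (G r v) = 1 := by
  have h := unitary_col Gᴴ (by simpa using mul_eq_one_comm.1 hG) r
  simpa using h

lemma simul_diag {n ℓ : ℕ} (C : Fin ℓ → Matrix (Fin n) (Fin n) ℂ)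
    (hC : ∀ i, (C i).PosSemidef) (hcomm : ∀ i j, C i * C j = C j * C i) :
    ∃ (U : Matrix (Fin n) (Fin n) ℂ) (c : Fin ℓ → Fin n → ℝ), Uᴴ * U = 1 ∧
      (∀ i k, 0 ≤ c i k) ∧ ∀ i, C i = U * diagonal (fun k => (c i k : ℂ)) * Uᴴ := by
  classical
  let T : Fin ℓ → Module.End ℂ (EuclideanSpace ℂ (Fin n)) := fun i => toEuclideanLin (C i)
  have hT : ∀ i, (T i).IsSymmetric := fun i => isSymmetric_toEuclideanLin_iff.mpr (hC i).1
  have hTC : ∀ i j, Commute (T i) (T j) := by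
    intro i j
    refine LinearMap.ext fun x => ?_
    simp [T, toLpLin_apply, hcomm i j]
  let V : (Fin ℓ → ℂ) → Submodule ℂ (EuclideanSpace ℂ (Fin n)) :=
    fun γ => ⨅ j, Module.End.eigenspace (T j) (γ j)
  have hVint : DirectSum.IsInternal V :=
    LinearMap.IsSymmetric.directSum_isInternal_of_pairwise_commute hT (fun i j _ => hTC i j)
  have hort : OrthogonalFamily ℂ (fun γ => V γ) fun γ => (V γ).subtypeₗᵢ :=
    LinearMap.IsSymmetric.orthogonalFamily_iInf_eigenspaces hT
  have hVint' := DirectSum.isInternal_ne_bot_iff.2 hVint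
  have hort' : OrthogonalFamily ℂ (fun γ : {γ // V γ ≠ ⊥} => V γ) fun γ => (V γ).subtypeₗᵢ :=
    hort.comp Subtype.val_injective
  let _ : Fintype {γ // V γ ≠ ⊥} :=
    hVint.submodule_iSupIndep.fintypeNeBotOfFiniteDimensional
  have hn : Module.finrank ℂ (EuclideanSpace ℂ (Fin n)) = n := by simp
  let b := hVint'.subordinateOrthonormalBasis hn hort'
  let g : Fin n → (Fin ℓ → ℂ) := fun a => (hVint'.subordinateOrthonormalBasisIndex hn a hort').1
  have hb : ∀ a i, T i (b a) = g a i • b a := by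
    intro a i
    have h := hVint'.subordinateOrthonormalBasis_subordinate hn a hort'
    have h2 := (Submodule.mem_iInf _).1 h i
    exact Module.End.mem_eigenspace_iff.1 h2
  let U : Matrix (Fin n) (Fin n) ℂ :=
    (EuclideanSpace.basisFun (Fin n) ℂ).toBasis.toMatrix b.toBasis
  have hUa : ∀ r k, U r k = b k r := fun r k => rfl
  have hU : Uᴴ * U = 1 :=
    (Matrix.mem_unitaryGroup_iff'.1
      ((EuclideanSpace.basisFun (Fin n) ℂ).toMatrix_orthonormalBasis_mem_unitary b))
  have hU' : U * Uᴴ = 1 := mul_eq_one_comm.1 hU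
  have hCU : ∀ i, C i * U = U * diagonal (fun k => g k i) := by
    intro i
    ext r k
    rw [Matrix.mul_diagonal]
    have h := congrArg (fun x : EuclideanSpace ℂ (Fin n) => x r) (hb k i)
    simp only [T, toLpLin_apply, PiLp.smul_apply, smul_eq_mul] at h
    rw [hUa, mul_comm, ← h]
    rfl
  have hD : ∀ i, Uᴴ * C i * U = diagonal (fun k => g k i) := by
    intro i
    rw [Matrix.mul_assoc, hCU, ← Matrix.mul_assoc, hU, Matrix.one_mul]
  have hpos : ∀ i k, 0 ≤ g k i := by
    intro i k
    have h := (hC i).conjTranspose_mul_mul_same U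
    rw [hD] at h
    exact (posSemidef_diagonal_iff.1 h) k
  have hre : ∀ i k, (((g k i).re : ℝ) : ℂ) = g k i := fun i k =>
    (Complex.eq_re_of_ofReal_le (r := 0) (by simpa using hpos i k)).symm
  refine ⟨U, fun i k => (g k i).re, hU, fun i k => (Complex.le_def.1 (hpos i k)).1, fun i => ?_⟩
  simp only [hre]
  rw [← hCU, Matrix.mul_assoc, hU', Matrix.mul_one]

lemma herm_diag {m : Type*} [Fintype m] [DecidableEq m] {M : Matrix m m ℂ} (h : M.IsHermitian) :
    ∃ E : Matrix m m ℂ, Eᴴ * E = 1 ∧ M = E * diagonal (fun r => (h.eigenvalues r : ℂ)) * Eᴴ := by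
  refine ⟨h.eigenvectorUnitary, ?_, ?_⟩
  · exact Matrix.mem_unitaryGroup_iff'.1 h.eigenvectorUnitary.2
  · exact h.spectral_theorem

/-- For mutually commuting PSD `Cᵢ` and self-adjoint `Aᵢ`, and every probability
distribution `p`, `∑ pᵢ Cᵢ ⊗ Aᵢ↓ ⪰ ∑ pᵢ Cᵢ ⊗ Aᵢ`, where `Aᵢ↓` is the diagonalization of
`Aᵢ` in a fixed basis with eigenvalues `μ i` in non-increasing order. -/
theorem stmt4 {dK dH ℓ : ℕ}
    (C : Fin ℓ → Matrix (Fin dK) (Fin dK) ℂ)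
    (A : Fin ℓ → Matrix (Fin dH) (Fin dH) ℂ)
    (hC : ∀ i, (C i).PosSemidef) (hcomm : ∀ i j, C i * C j = C j * C i)
    (hA : ∀ i, (A i).IsHermitian)
    (μ : Fin ℓ → Fin dH → ℝ) (hord : ∀ i, Antitone (μ i))
    (hperm : ∀ i, ∃ e : Equiv.Perm (Fin dH), μ i = (hA i).eigenvalues ∘ e)
    (p : Fin ℓ → ℝ) (hp : ∀ i, 0 ≤ p i) (hp1 : ∑ i, p i = 1)
    (h1 : (∑ i, (↑(p i) : ℂ) •
      (C i ⊗ₖ Matrix.diagonal (fun j => (↑(μ i j) : ℂ)))).IsHermitian)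
    (h2 : (∑ i, (↑(p i) : ℂ) • (C i ⊗ₖ A i)).IsHermitian) :
    Maj h1.eigenvalues h2.eigenvalues := by
  choose e he using hperm
  constructor
  swap
  · have t1 := h1.trace_eq_sum_eigenvalues
    have t2 := h2.trace_eq_sum_eigenvalues
    have : ((∑ i, h1.eigenvalues i : ℝ) : ℂ) = ((∑ i, h2.eigenvalues i : ℝ) : ℂ) := by
      push_cast
      refine t1.symm.trans (Eq.trans ?_ t2)
      rw [Matrix.trace_sum, Matrix.trace_sum]
      refine Finset.sum_congr rfl fun i _ => ?_
      rw [Matrix.trace_smul, Matrix.trace_smul, Matrix.trace_kronecker, Matrix.trace_kronecker,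
        (hA i).trace_eq_sum_eigenvalues, Matrix.trace_diagonal, he i]
      congr 2
      exact Equiv.sum_comp (e i) (fun j => ((hA i).eigenvalues j : ℂ))
    exact_mod_cast this
  intro s
  obtain ⟨U, c, hU, hc, hCU⟩ := simul_diag C hC hcomm
  have hV := fun i => herm_diag (hA i)
  choose V hV hAV using hV
  obtain ⟨E, hE, hM⟩ := herm_diag h2
  obtain ⟨F, hF, hN⟩ := herm_diag h1
  have hU' : U * Uᴴ = 1 := mul_eq_one_comm.1 hU
  have hV' : ∀ i, V i * (V i)ᴴ = 1 := fun i => mul_eq_one_comm.1 (hV i)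
  -- the right-hand side
  let W : Fin ℓ → Matrix (Fin dK × Fin dH) (Fin dK × Fin dH) ℂ := fun i => U ⊗ₖ V i
  let G : Fin ℓ → Matrix (Fin dK × Fin dH) (Fin dK × Fin dH) ℂ := fun i => (W i)ᴴ * E
  have hWW : ∀ i, W i * (W i)ᴴ = 1 := by
    intro i
    simp only [W]
    rw [conjTranspose_kronecker, ← mul_kronecker_mul, hU', hV', one_kronecker_one]
  have hG : ∀ i, (G i)ᴴ * G i = 1 := by
    intro i
    simp only [G]
    rw [conjTranspose_mul, conjTranspose_conjTranspose, Matrix.mul_assoc,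
      ← Matrix.mul_assoc (W i), hWW, Matrix.one_mul, hE]
  have heig : ∀ v, h2.eigenvalues v
      = ∑ i, p i * ∑ r : Fin dK × Fin dH,
        (c i r.1 * (hA i).eigenvalues r.2) * Complex.normSq (G i r v) := by
    intro v
    have hd : Eᴴ * (∑ i, (↑(p i) : ℂ) • (C i ⊗ₖ A i)) * E
        = diagonal (fun r => (h2.eigenvalues r : ℂ)) := by
      calc _ = Eᴴ * (E * diagonal (fun r => (h2.eigenvalues r : ℂ)) * Eᴴ) * E := by rw [← hM]
        _ = (Eᴴ * E) * diagonal (fun r => (h2.eigenvalues r : ℂ)) * (Eᴴ * E) := by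
            simp only [Matrix.mul_assoc]
        _ = _ := by rw [hE]; simp
    have hterm : ∀ i, Eᴴ * (C i ⊗ₖ A i) * E = (G i)ᴴ *
        diagonal (fun r : Fin dK × Fin dH => ((c i r.1 * (hA i).eigenvalues r.2 : ℝ) : ℂ)) * G i := by
      intro i
      have hCA : C i ⊗ₖ A i = W i *
          diagonal (fun r : Fin dK × Fin dH => ((c i r.1 * (hA i).eigenvalues r.2 : ℝ) : ℂ))
          * (W i)ᴴ := by
        conv_lhs => rw [hCU i, hAV i]
        rw [mul_kronecker_mul, mul_kronecker_mul, diagonal_kronecker_diagonal,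
          ← conjTranspose_kronecker]
        push_cast
        rfl
      rw [hCA]
      simp only [G, conjTranspose_mul, conjTranspose_conjTranspose, Matrix.mul_assoc]
    have hv := congrFun (congrFun hd v) v
    rw [Matrix.mul_sum, Matrix.sum_mul, Matrix.diagonal_apply_eq, Matrix.sum_apply] at hv
    simp only [Matrix.mul_smul, Matrix.smul_mul, hterm, Matrix.smul_apply, conj_diag_apply,
      smul_eq_mul] at hv
    exact_mod_cast hv.symm
  let a : Fin ℓ → Fin dK → Fin dH → ℝ := fun i k j => ∑ v ∈ s, Complex.normSq (G i (k, j) v)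
  have ha0 : ∀ i k j, 0 ≤ a i k j := fun i k j =>
    Finset.sum_nonneg fun v _ => Complex.normSq_nonneg _
  have ha1 : ∀ i k j, a i k j ≤ 1 := fun i k j => by
    rw [← unitary_row (G i) (hG i) (k, j)]
    exact Finset.sum_le_sum_of_subset_of_nonneg (Finset.subset_univ _)
      fun v _ _ => Complex.normSq_nonneg _
  let q : Fin dK → ℝ := fun k => ∑ v ∈ s,
    ((Eᴴ * ((U * diagonal (fun k' => if k' = k then 1 else 0) * Uᴴ) ⊗ₖ
      (1 : Matrix (Fin dH) (Fin dH) ℂ)) * E : Matrix (Fin dK × Fin dH) (Fin dK × Fin dH) ℂ) v v).re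
  have haq : ∀ i k, ∑ j, a i k j = q k := by
    intro i k
    simp only [a, q]
    rw [Finset.sum_comm]
    refine Finset.sum_congr rfl fun v _ => ?_
    have hCA : (U * diagonal (fun k' => if k' = k then 1 else 0) * Uᴴ) ⊗ₖ
        (1 : Matrix (Fin dH) (Fin dH) ℂ) = W i *
          diagonal (fun r : Fin dK × Fin dH => ((if r.1 = k then 1 else 0 : ℝ) : ℂ))
          * (W i)ᴴ := by
      conv_lhs => rw [← hV' i, ← Matrix.mul_one (V i), ← Matrix.diagonal_one]
      rw [mul_kronecker_mul, mul_kronecker_mul, diagonal_kronecker_diagonal,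
          ← conjTranspose_kronecker]
      simp [W, apply_ite (Complex.ofReal)]
    have hconj : Eᴴ * ((U * diagonal (fun k' => if k' = k then 1 else 0) * Uᴴ) ⊗ₖ
        (1 : Matrix (Fin dH) (Fin dH) ℂ)) * E = (G i)ᴴ *
          diagonal (fun r : Fin dK × Fin dH => ((if r.1 = k then 1 else 0 : ℝ) : ℂ)) * G i := by
      rw [hCA]
      simp only [G, conjTranspose_mul, conjTranspose_conjTranspose, Matrix.mul_assoc]
    rw [hconj, conj_diag_apply, Complex.ofReal_re, Fintype.sum_prod_type,
      Finset.sum_eq_single k]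
    · simp
    · intro b _ hb; simp [hb]
    · simp
  -- nonempty index, from the probability hypothesis
  have hi0 : Nonempty (Fin ℓ) := by
    by_contra h
    rw [not_nonempty_iff] at h
    simp at hp1
  obtain ⟨i0⟩ := hi0
  have hq0 : ∀ k, 0 ≤ q k := fun k => haq i0 k ▸ Finset.sum_nonneg fun j _ => ha0 i0 k j
  have hqn : ∀ k, q k ≤ dH := fun k => by
    rw [← haq i0 k]
    have : ∑ j, a i0 k j ≤ ∑ _j : Fin dH, (1:ℝ) := Finset.sum_le_sum fun j _ => ha1 i0 k j
    simpa using this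
  have hqs : ∑ k, q k = s.card := by
    simp only [← haq i0, a]
    rw [← Fintype.sum_prod_type' (f := fun k j => ∑ v ∈ s, Complex.normSq (G i0 (k, j) v)),
      Finset.sum_comm]
    simp [unitary_col (G i0) (hG i0)]
  -- the left-hand side
  let d : Fin dK × Fin dH → ℝ := fun r => ∑ i, p i * (c i r.1 * μ i r.2)
  let w : Fin dK × Fin dH → ℝ := fun r => gw (q r.1) r.2
  have hle : ∑ v ∈ s, h2.eigenvalues v ≤ ∑ r, w r * d r := by
    have e1 : ∑ v ∈ s, h2.eigenvalues v
        = ∑ i, p i * ∑ k, c i k * ∑ j, a i k j * (hA i).eigenvalues j := by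
      simp only [heig]
      rw [Finset.sum_comm]
      refine Finset.sum_congr rfl fun i _ => ?_
      rw [← Finset.mul_sum, Finset.sum_comm, Fintype.sum_prod_type]
      congr 1
      refine Finset.sum_congr rfl fun k _ => ?_
      rw [Finset.mul_sum]
      refine Finset.sum_congr rfl fun j _ => ?_
      rw [← Finset.mul_sum]
      simp only [a]
      ring
    have e2 : ∑ r, w r * d r = ∑ i, p i * ∑ k, c i k * ∑ j : Fin dH, gw (q k) j * μ i j := by
      simp only [w, d, Fintype.sum_prod_type, Finset.mul_sum]
      rw [Finset.sum_comm' (t' := Finset.univ) (s' := fun _ => Finset.univ) (by simp)]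
      rw [Finset.sum_comm]
      simp only [Finset.sum_comm (s := (Finset.univ : Finset (Fin dH)))
        (t := (Finset.univ : Finset (Fin ℓ)))]
      rw [Finset.sum_comm]
      refine Finset.sum_congr rfl fun i _ => Finset.sum_congr rfl fun k _ =>
        Finset.sum_congr rfl fun j _ => by ring
    rw [e1, e2]
    refine Finset.sum_le_sum fun i _ => mul_le_mul_of_nonneg_left ?_ (hp i)
    refine Finset.sum_le_sum fun k _ => mul_le_mul_of_nonneg_left ?_ (hc i k)
    have := aux_gw (μ i) (hord i) (fun j => a i k (e i j)) (fun j => ha0 _ _ _)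
      (fun j => ha1 _ _ _) (q k) (by rw [← haq i k]; exact Equiv.sum_comp (e i) (a i k))
    refine le_trans (le_of_eq ?_) this
    rw [← Equiv.sum_comp (e i)]
    simp [he i]
  let X : Matrix (Fin dK × Fin dH) (Fin dK × Fin dH) ℂ := U ⊗ₖ 1
  let Z : Matrix (Fin dK × Fin dH) (Fin dK × Fin dH) ℂ := Fᴴ * X
  have hXX : Xᴴ * X = 1 := by
    simp only [X]
    rw [conjTranspose_kronecker, ← mul_kronecker_mul, hU]; simp
  have hZ : Zᴴ * Z = 1 := by
    simp only [Z]
    rw [conjTranspose_mul, conjTranspose_conjTranspose, Matrix.mul_assoc,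
      ← Matrix.mul_assoc F, mul_eq_one_comm.1 hF, Matrix.one_mul, hXX]
  have hd : ∀ r, d r = ∑ v, h1.eigenvalues v * Complex.normSq (Z v r) := by
    intro r
    have hN' : (∑ i, (↑(p i) : ℂ) • (C i ⊗ₖ Matrix.diagonal (fun j => (↑(μ i j) : ℂ))))
        = X * diagonal (fun r => (d r : ℂ)) * Xᴴ := by
      have hdd : diagonal (fun r => (d r : ℂ)) = ∑ i, (p i : ℂ) •
          ((diagonal fun k => (c i k : ℂ)) ⊗ₖ (diagonal fun j => (μ i j : ℂ))) := by
        ext x y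
        simp only [diagonal_kronecker_diagonal, Matrix.sum_apply, Matrix.smul_apply,
          Matrix.diagonal_apply]
        split_ifs with h
        · simp [d]
        · simp
      rw [hdd, Matrix.mul_sum, Matrix.sum_mul]
      refine Finset.sum_congr rfl fun i _ => ?_
      rw [Matrix.mul_smul, Matrix.smul_mul]
      congr 1
      simp only [X]
      rw [conjTranspose_kronecker, ← mul_kronecker_mul, ← mul_kronecker_mul, ← hCU i]
      simp
    have h3 : diagonal (fun r => (d r : ℂ))
        = Zᴴ * diagonal (fun r => (h1.eigenvalues r : ℂ)) * Z := by
      calc diagonal (fun r => (d r : ℂ))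
          = (Xᴴ * X) * diagonal (fun r => (d r : ℂ)) * (Xᴴ * X) := by rw [hXX]; simp
        _ = Xᴴ * (X * diagonal (fun r => (d r : ℂ)) * Xᴴ) * X := by
            simp only [Matrix.mul_assoc]
        _ = Xᴴ * (F * diagonal (fun r => (h1.eigenvalues r : ℂ)) * Fᴴ) * X := by
            rw [← hN', ← hN]
        _ = _ := by
            simp only [Z, conjTranspose_mul, conjTranspose_conjTranspose, Matrix.mul_assoc]
    have := congrFun (congrFun h3 r) r
    rw [conj_diag_apply, Matrix.diagonal_apply_eq] at this
    exact_mod_cast this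
  have hw0 : ∀ r, 0 ≤ w r := fun r => gw_nonneg _ _
  have hw1 : ∀ r, w r ≤ 1 := fun r => gw_le_one _ _
  have hws : ∑ r, w r = s.card := by
    rw [Fintype.sum_prod_type, ← hqs]
    exact Finset.sum_congr rfl fun k _ => gw_sum (q k) (hq0 k) (hqn k)
  obtain ⟨t, htc, ht⟩ := aux_top h1.eigenvalues
    (fun v => ∑ r, w r * Complex.normSq (Z v r)) s.card
    (fun v => Finset.sum_nonneg fun r _ => mul_nonneg (hw0 r) (Complex.normSq_nonneg _))
    (fun v => by
      rw [← unitary_row Z hZ v]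
      refine Finset.sum_le_sum fun r _ => ?_
      exact mul_le_of_le_one_left (Complex.normSq_nonneg _) (hw1 r))
    (by
      rw [Finset.sum_comm]
      simp only [← Finset.mul_sum, unitary_col Z hZ, mul_one, hws])
  refine ⟨t, htc, hle.trans (le_trans (le_of_eq ?_) ht)⟩
  simp only [hd, Finset.mul_sum, Finset.sum_mul]
  rw [Finset.sum_comm]
  refine Finset.sum_congr rfl fun v _ => Finset.sum_congr rfl fun r _ => by ring
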